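/- Let 1 ≤ m ≤ n, let V = ℝ^{m+n}, let L = diag(J_m, J_n), and let g be the nondegenerate symmetric bilinear form with matrix diag(ε₁S_m, ε₂S_n), ε₁, ε₂ ∈ {1, −1}. Then 𝔤_L consists precisely of the block matrices of the form [[0, M], [−ε₁ε₂·S_n·Mᵀ·S_m, 0]], where M ranges over the m×n matrices satisfying M_{i,l} = 0 whenever l − i < n − m and M_{i,l} = M_{i+1,l+1} whenever both entries are defined. Moreover, 𝔤_L is an abelian Lie algebra of dimension m. -/

import Mathlib

open Matrix

/-- The `n × n` real nilpotent Jordan block: `(J n) i j = 1` if `j = i + 1`, else `0`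
(0-based indices). -/
def JordanBlock (n : ℕ) : Matrix (Fin n) (Fin n) ℝ :=
  Matrix.of fun i j => if (j : ℕ) = (i : ℕ) + 1 then 1 else 0

/-- The `n × n` antidiagonal matrix `S n` with ones on the antidiagonal
(0-based: `(S n) i j = 1` iff `i + j + 1 = n`). -/
def AntiDiag (n : ℕ) : Matrix (Fin n) (Fin n) ℝ :=
  Matrix.of fun i j => if (i : ℕ) + (j : ℕ) + 1 = n then 1 else 0

/-!
Write `M†` for the reflection of `M` in the antidiagonal, that is `M† = S Mᵀ S`. It reverses
products and fixes Jordan blocks, so it maps solutions of `M J_n = J_m M` to solutions of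
`N J_m = J_n N`. Since `J_n` is cyclic with generator the last basis vector, an intertwiner `M` is
determined by its last column, which is arbitrary when `m ≤ n`, and `M` is constant along
diagonals. In particular a square matrix commuting with `J_n` satisfies `A† = A`.

Skew-symmetry of `X = [[A, B], [C, D]]` means `A† = -A`, `D† = -D` and `C = -(ε₁/ε₂) B†`. If `X`
also commutes with `L`, then `A† = A` and `D† = D`, whence `A = D = 0`, while `B` is an arbitrary
intertwiner. Two such matrices commute because `M N†` and `M† N` commute with Jordan blocks and are
therefore equal to their reflections `N M†` and `N† M`.
-/

section Antitranspose

variable {R : Type*} {k m n : ℕ}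

/-- The reflection of a matrix in its antidiagonal, written `M†` above. It is the adjoint
of `M` with respect to the forms `AntiDiag`, see `antiDiag_mul_transpose_mul_antiDiag`. -/
def antitranspose (M : Matrix (Fin m) (Fin n) R) : Matrix (Fin n) (Fin m) R :=
  Mᵀ.submatrix Fin.rev Fin.rev

lemma antitranspose_apply (M : Matrix (Fin m) (Fin n) R) (i : Fin n) (j : Fin m) :
    antitranspose M i j = M j.rev i.rev :=
  rfl

lemma antitranspose_antitranspose (M : Matrix (Fin m) (Fin n) R) :
    antitranspose (antitranspose M) = M := by
  ext i j
  simp only [antitranspose_apply, Fin.rev_rev]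

lemma antitranspose_inj {M N : Matrix (Fin m) (Fin n) R} :
    antitranspose M = antitranspose N ↔ M = N :=
  (Function.LeftInverse.injective antitranspose_antitranspose).eq_iff

lemma antitranspose_neg [Neg R] (M : Matrix (Fin m) (Fin n) R) :
    antitranspose (-M) = -antitranspose M :=
  rfl

lemma antitranspose_smul {S : Type*} [SMul S R] (c : S) (M : Matrix (Fin m) (Fin n) R) :
    antitranspose (c • M) = c • antitranspose M :=
  rfl

lemma antitranspose_mul [AddCommMonoid R] [CommMagma R] (M : Matrix (Fin k) (Fin m) R)
    (N : Matrix (Fin m) (Fin n) R) :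
    antitranspose (M * N) = antitranspose N * antitranspose M := by
  rw [antitranspose, transpose_mul]
  exact (submatrix_mul_equiv Nᵀ Mᵀ Fin.rev Fin.revPerm Fin.rev).symm

lemma antitranspose_jordanBlock (n : ℕ) : antitranspose (JordanBlock n) = JordanBlock n := by
  ext i j
  have superdiagonal_iff : (i.rev : ℕ) = j.rev + 1 ↔ (j : ℕ) = i + 1 := by
    simp only [Fin.val_rev]
    omega
  simp only [antitranspose_apply, JordanBlock, of_apply, superdiagonal_iff]

end Antitranspose

section AntiDiag

variable {m n : ℕ}

lemma antiDiag_apply (i j : Fin n) : AntiDiag n i j = if j = i.rev then 1 else 0 := by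
  have antidiagonal_iff : (i : ℕ) + j + 1 = n ↔ j = i.rev := by
    rw [Fin.ext_iff, Fin.val_rev]
    omega
  simp only [AntiDiag, of_apply, antidiagonal_iff]

lemma antiDiag_mul_apply (M : Matrix (Fin m) (Fin n) ℝ) (i : Fin m) (j : Fin n) :
    (AntiDiag m * M) i j = M i.rev j := by
  simp [mul_apply, antiDiag_apply]

lemma mul_antiDiag_apply (M : Matrix (Fin m) (Fin n) ℝ) (i : Fin m) (j : Fin n) :
    (M * AntiDiag n) i j = M i j.rev := by
  have eq_rev_comm (k : Fin n) : j = k.rev ↔ k = j.rev := by rw [← Fin.rev_eq_iff, eq_comm]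
  simp [mul_apply, antiDiag_apply, eq_rev_comm]

lemma antiDiag_mul_antiDiag (n : ℕ) : AntiDiag n * AntiDiag n = 1 := by
  ext i j
  rw [antiDiag_mul_apply, antiDiag_apply, Fin.rev_rev, one_apply]
  simp only [eq_comm]

lemma antiDiag_mul_inj {M N : Matrix (Fin m) (Fin n) ℝ} :
    AntiDiag m * M = AntiDiag m * N ↔ M = N := by
  refine ⟨fun h => ?_, congrArg _⟩
  simpa only [← Matrix.mul_assoc, antiDiag_mul_antiDiag, Matrix.one_mul] using
    congrArg (AntiDiag m * ·) h

lemma transpose_mul_antiDiag (M : Matrix (Fin m) (Fin n) ℝ) :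
    Mᵀ * AntiDiag m = AntiDiag n * antitranspose M := by
  ext i j
  rw [mul_antiDiag_apply, antiDiag_mul_apply, antitranspose_apply, Fin.rev_rev, transpose_apply]

lemma antiDiag_mul_transpose_mul_antiDiag (M : Matrix (Fin m) (Fin n) ℝ) :
    AntiDiag n * Mᵀ * AntiDiag m = antitranspose M := by
  rw [Matrix.mul_assoc, transpose_mul_antiDiag, ← Matrix.mul_assoc, antiDiag_mul_antiDiag,
    Matrix.one_mul]

end AntiDiag

section UpperToeplitz

variable {R : Type*} {m n : ℕ}

/-- `M` is constant along diagonals and vanishes unless `n - m ≤ l - i`, so that for `m ≤ n` it is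
an upper triangular `m × m` Toeplitz matrix preceded by `n - m` zero columns. -/
def IsUpperToeplitz [Zero R] (M : Matrix (Fin m) (Fin n) R) : Prop :=
  (∀ (i : Fin m) (l : Fin n), (l : ℤ) - (i : ℤ) < (n : ℤ) - (m : ℤ) → M i l = 0) ∧
    ∀ (i : Fin m) (l : Fin n) (hi : (i : ℕ) + 1 < m) (hl : (l : ℕ) + 1 < n),
      M i l = M ⟨(i : ℕ) + 1, hi⟩ ⟨(l : ℕ) + 1, hl⟩

/-- The `m × n` matrix which is constant along diagonals, has last column `c`, and vanishes on the
diagonals that do not meet the last column. -/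
def upperToeplitz (n : ℕ) [Semiring R] : (Fin m → R) →ₗ[R] Matrix (Fin m) (Fin n) R where
  toFun c := of fun i l => if h : (i : ℕ) + l.rev < m then c ⟨i + l.rev, h⟩ else 0
  map_add' c d := by
    ext i l
    simp only [of_apply, Matrix.add_apply, Pi.add_apply]
    split_ifs <;> simp only [add_zero]
  map_smul' r c := by
    ext i l
    simp only [of_apply, Matrix.smul_apply, Pi.smul_apply, RingHom.id_apply]
    split_ifs <;> simp only [smul_zero]

variable [Semiring R]

lemma upperToeplitz_apply (c : Fin m → R) (i : Fin m) (l : Fin n) :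
    upperToeplitz n c i l = if h : (i : ℕ) + l.rev < m then c ⟨i + l.rev, h⟩ else 0 :=
  rfl

lemma upperToeplitz_injective (hmn : m ≤ n) :
    Function.Injective (upperToeplitz n : (Fin m → R) →ₗ[R] Matrix (Fin m) (Fin n) R) := by
  intro c d h
  ext i
  have last_column := congrFun₂ h i (Fin.rev ⟨0, i.pos.trans_le hmn⟩)
  simpa [upperToeplitz_apply] using last_column

lemma isUpperToeplitz_upperToeplitz (c : Fin m → R) : IsUpperToeplitz (upperToeplitz n c) := by
  refine ⟨fun i l h => ?_, fun i l hi hl => ?_⟩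
  · exact dif_neg (by rw [Fin.val_rev]; omega)
  · have same_diagonal : (i : ℕ) + l.rev = i + 1 + (Fin.rev ⟨l + 1, hl⟩ : Fin n) := by
      simp only [Fin.val_rev]
      omega
    simp only [upperToeplitz_apply, same_diagonal]

lemma antitranspose_upperToeplitz (c : Fin n → R) :
    antitranspose (upperToeplitz n c) = upperToeplitz n c := by
  ext i l
  simp only [antitranspose_apply, upperToeplitz_apply, Fin.rev_rev, add_comm]

end UpperToeplitz

section JordanIntertwiner

variable {k m n : ℕ}

lemma jordanBlock_mul_apply_of_eq_succ (M : Matrix (Fin m) (Fin n) ℝ) {i j : Fin m}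
    (hj : (j : ℕ) = i + 1) (l : Fin n) : (JordanBlock m * M) i l = M j l := by
  simp [mul_apply, JordanBlock, ← hj, Fin.val_inj]

lemma jordanBlock_mul_apply_of_last (M : Matrix (Fin m) (Fin n) ℝ) {i : Fin m}
    (hi : (i : ℕ) + 1 = m) (l : Fin n) : (JordanBlock m * M) i l = 0 := by
  have off_superdiagonal (j : Fin m) : (j : ℕ) ≠ i + 1 := by omega
  simp [mul_apply, JordanBlock, off_superdiagonal]

lemma mul_jordanBlock_apply_of_eq_succ (M : Matrix (Fin m) (Fin n) ℝ) (i : Fin m) {j l : Fin n}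
    (hl : (l : ℕ) = j + 1) : (M * JordanBlock n) i l = M i j := by
  simp [mul_apply, JordanBlock, hl, Fin.val_inj]

lemma mul_jordanBlock_apply_of_eq_zero (M : Matrix (Fin m) (Fin n) ℝ) (i : Fin m) {l : Fin n}
    (hl : (l : ℕ) = 0) : (M * JordanBlock n) i l = 0 := by
  simp [mul_apply, JordanBlock, hl]

/-- `M` intertwines the nilpotent Jordan blocks of sizes `n` and `m`, i.e. it is a homomorphism
between the corresponding `ℝ[X]`-modules. -/
def IsJordanIntertwiner (M : Matrix (Fin m) (Fin n) ℝ) : Prop :=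
  M * JordanBlock n = JordanBlock m * M

protected lemma IsJordanIntertwiner.mul {M : Matrix (Fin k) (Fin m) ℝ}
    {N : Matrix (Fin m) (Fin n) ℝ} (hM : IsJordanIntertwiner M) (hN : IsJordanIntertwiner N) :
    IsJordanIntertwiner (M * N) := by
  unfold IsJordanIntertwiner at *
  rw [Matrix.mul_assoc, hN, ← Matrix.mul_assoc, hM, Matrix.mul_assoc]

protected lemma IsJordanIntertwiner.smul {M : Matrix (Fin m) (Fin n) ℝ} (hM : IsJordanIntertwiner M)
    (c : ℝ) : IsJordanIntertwiner (c • M) := by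
  unfold IsJordanIntertwiner at *
  rw [Matrix.smul_mul, hM, Matrix.mul_smul]

protected lemma IsJordanIntertwiner.antitranspose {M : Matrix (Fin m) (Fin n) ℝ}
    (hM : IsJordanIntertwiner M) : IsJordanIntertwiner (antitranspose M) := by
  simpa only [IsJordanIntertwiner, antitranspose_mul, antitranspose_jordanBlock] using
    (congrArg antitranspose hM).symm

lemma IsUpperToeplitz.isJordanIntertwiner {M : Matrix (Fin m) (Fin n) ℝ} (hmn : m ≤ n)
    (hM : IsUpperToeplitz M) : IsJordanIntertwiner M := by
  obtain ⟨eq_zero, eq_succ⟩ := hM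
  ext i ⟨l, hl⟩
  rcases l with _ | l <;> rcases lt_or_ge ((i : ℕ) + 1) m with hi | hi
  · rw [mul_jordanBlock_apply_of_eq_zero _ _ rfl,
      jordanBlock_mul_apply_of_eq_succ _ (j := ⟨i + 1, hi⟩) rfl, eq_zero _ _ (by grind)]
  · rw [mul_jordanBlock_apply_of_eq_zero _ _ rfl, jordanBlock_mul_apply_of_last _ (by omega)]
  · rw [mul_jordanBlock_apply_of_eq_succ _ _ (j := ⟨l, by omega⟩) rfl,
      jordanBlock_mul_apply_of_eq_succ _ (j := ⟨i + 1, hi⟩) rfl, eq_succ _ _ hi hl]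
  · rw [mul_jordanBlock_apply_of_eq_succ _ _ (j := ⟨l, by omega⟩) rfl,
      jordanBlock_mul_apply_of_last _ (by omega), eq_zero _ _ (by grind)]

lemma IsJordanIntertwiner.apply_eq {M : Matrix (Fin m) (Fin n) ℝ} (hM : IsJordanIntertwiner M)
    (i : Fin m) (l : Fin n) :
    M i l = if h : (i : ℕ) + l.rev < m then M ⟨i + l.rev, h⟩ (Fin.rev ⟨0, l.pos⟩) else 0 := by
  obtain ⟨d, hd⟩ : ∃ d, d = (l.rev : ℕ) := ⟨_, rfl⟩
  induction d generalizing i l with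
  | zero =>
    have hl : l = Fin.rev ⟨0, l.pos⟩ := by rw [← Fin.rev_eq_iff, Fin.ext_iff, ← hd]
    simp only [← hd, ← hl, add_zero, i.isLt, dif_pos]
  | succ d ih =>
    have hl : (l : ℕ) + 1 < n := by grind
    have next_rev : d = ((Fin.rev ⟨l + 1, hl⟩ : Fin n) : ℕ) := by grind
    have shift : M i l = (JordanBlock m * M) i ⟨l + 1, hl⟩ := by
      rw [← hM, mul_jordanBlock_apply_of_eq_succ _ _ rfl]
    rcases lt_or_ge ((i : ℕ) + 1) m with hi | hi
    · rw [shift, jordanBlock_mul_apply_of_eq_succ _ (j := ⟨i + 1, hi⟩) rfl, ih _ _ next_rev]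
      simp only [← hd, ← next_rev, add_right_comm, ← add_assoc]
    · rw [shift, jordanBlock_mul_apply_of_last _ (by omega), dif_neg (by omega)]

lemma IsJordanIntertwiner.exists_upperToeplitz_eq {M : Matrix (Fin m) (Fin n) ℝ} (hmn : m ≤ n)
    (hM : IsJordanIntertwiner M) : ∃ c, upperToeplitz n c = M :=
  ⟨fun i => M i (Fin.rev ⟨0, i.pos.trans_le hmn⟩), ext fun i l => (hM.apply_eq i l).symm⟩

lemma isJordanIntertwiner_iff_exists_upperToeplitz_eq {M : Matrix (Fin m) (Fin n) ℝ}
    (hmn : m ≤ n) : IsJordanIntertwiner M ↔ ∃ c, upperToeplitz n c = M := by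
  refine ⟨fun hM => hM.exists_upperToeplitz_eq hmn, ?_⟩
  rintro ⟨c, rfl⟩
  exact (isUpperToeplitz_upperToeplitz c).isJordanIntertwiner hmn

lemma isJordanIntertwiner_iff_isUpperToeplitz {M : Matrix (Fin m) (Fin n) ℝ} (hmn : m ≤ n) :
    IsJordanIntertwiner M ↔ IsUpperToeplitz M := by
  refine ⟨fun hM => ?_, fun hM => hM.isJordanIntertwiner hmn⟩
  obtain ⟨c, rfl⟩ := hM.exists_upperToeplitz_eq hmn
  exact isUpperToeplitz_upperToeplitz c

lemma IsJordanIntertwiner.antitranspose_eq {A : Matrix (Fin n) (Fin n) ℝ}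
    (hA : IsJordanIntertwiner A) : antitranspose A = A := by
  obtain ⟨c, rfl⟩ := hA.exists_upperToeplitz_eq le_rfl
  exact antitranspose_upperToeplitz c

lemma IsJordanIntertwiner.eq_zero_of_antitranspose_eq_neg {A : Matrix (Fin n) (Fin n) ℝ}
    (hA : IsJordanIntertwiner A) (hskew : antitranspose A = -A) : A = 0 := by
  have eq_neg : A = -A := hA.antitranspose_eq.symm.trans hskew
  ext i j
  exact self_eq_neg.mp (congrFun₂ eq_neg i j)

lemma IsJordanIntertwiner.mul_antitranspose_comm {M N : Matrix (Fin m) (Fin n) ℝ}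
    (hM : IsJordanIntertwiner M) (hN : IsJordanIntertwiner N) :
    M * antitranspose N = N * antitranspose M := by
  rw [← (hM.mul hN.antitranspose).antitranspose_eq, antitranspose_mul,
    antitranspose_antitranspose]

end JordanIntertwiner

attribute [local instance] LieRing.ofAssociativeRing

section SkewCentralizer

variable {ι R : Type*} [Fintype ι] [CommRing R]

lemma isSkewAdjoint_iff_forall_dotProduct (G X : Matrix ι ι R) :
    G.IsSkewAdjoint X ↔ ∀ u v, (X *ᵥ u) ⬝ᵥ (G *ᵥ v) = -u ⬝ᵥ (G *ᵥ (X *ᵥ v)) := by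
  have lhs_eq (u v : ι → R) : (X *ᵥ u) ⬝ᵥ (G *ᵥ v) = u ⬝ᵥ ((Xᵀ * G) *ᵥ v) := by
    rw [← mulVec_mulVec, dotProduct_mulVec u, vecMul_transpose]
  have rhs_eq (u v : ι → R) : -u ⬝ᵥ (G *ᵥ (X *ᵥ v)) = u ⬝ᵥ ((G * -X) *ᵥ v) := by
    rw [mulVec_mulVec, Matrix.mul_neg, neg_mulVec, dotProduct_neg, neg_dotProduct]
  simp only [lhs_eq, rhs_eq, Matrix.IsSkewAdjoint, Matrix.IsAdjointPair]
  refine ⟨fun h u v => by rw [h], fun h => ext_iff_mulVec.mpr fun v => ?_⟩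
  exact dotProduct_eq _ _ fun u => by simpa only [dotProduct_comm] using h u v

variable [DecidableEq ι]

/-- The Lie algebra `𝔤_L` of matrices that are skew-adjoint for the bilinear form with matrix `G`
and commute with `L`. -/
def skewCentralizer (G L : Matrix ι ι R) : LieSubalgebra R (Matrix ι ι R) :=
  skewAdjointMatricesLieSubalgebra G ⊓
    lieSubalgebraOfSubalgebra R _ (Subalgebra.centralizer R {L})

lemma mem_skewCentralizer {G L X : Matrix ι ι R} :
    X ∈ skewCentralizer G L ↔ G.IsSkewAdjoint X ∧ X * L = L * X := by
  have mem_centralizer_iff :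
      X ∈ lieSubalgebraOfSubalgebra R _ (Subalgebra.centralizer R {L}) ↔ L * X = X * L :=
    forall_eq
  rw [skewCentralizer, LieSubalgebra.mem_inf, mem_skewAdjointMatricesLieSubalgebra,
    mem_skewAdjointMatricesSubmodule, mem_centralizer_iff, eq_comm (a := L * X)]

lemma coe_skewCentralizer (G L : Matrix ι ι R) :
    (skewCentralizer G L : Set (Matrix ι ι R)) =
      {X | (∀ u v, (X *ᵥ u) ⬝ᵥ (G *ᵥ v) = -u ⬝ᵥ (G *ᵥ (X *ᵥ v))) ∧ X * L = L * X} := by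
  ext X
  simp only [SetLike.mem_coe, mem_skewCentralizer, isSkewAdjoint_iff_forall_dotProduct,
    Set.mem_ofPred_eq]

lemma isLieAbelian_iff_forall_mul_comm {A : Type*} [Ring A] [Algebra R A]
    (𝔤 : LieSubalgebra R A) : IsLieAbelian 𝔤 ↔ ∀ x ∈ 𝔤, ∀ y ∈ 𝔤, x * y = y * x := by
  have bracket_eq_zero_iff (x y : 𝔤) : ⁅x, y⁆ = 0 ↔ (x : A) * y = y * x := by
    rw [Subtype.ext_iff, LieSubalgebra.coe_bracket, LieRing.of_associative_ring_bracket,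
      ZeroMemClass.coe_zero, sub_eq_zero]
  refine ⟨fun h x hx y hy => (bracket_eq_zero_iff ⟨x, hx⟩ ⟨y, hy⟩).mp (h.trivial _ _), fun h => ?_⟩
  exact ⟨fun x y => (bracket_eq_zero_iff x y).mpr (h x x.2 y y.2)⟩

end SkewCentralizer

section JordanSkewCentralizer

variable {m n : ℕ} {ε₁ ε₂ : ℝ}

lemma fromBlocks_mul_diag_comm_iff {p q R : Type*} [Fintype p] [Fintype q]
    [NonUnitalNonAssocSemiring R] {A P : Matrix p p R} {B : Matrix p q R} {C : Matrix q p R}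
    {D Q : Matrix q q R} :
    fromBlocks A B C D * fromBlocks P 0 0 Q = fromBlocks P 0 0 Q * fromBlocks A B C D ↔
      A * P = P * A ∧ B * Q = P * B ∧ C * P = Q * C ∧ D * Q = Q * D := by
  simp only [fromBlocks_multiply, fromBlocks_inj, Matrix.mul_zero, Matrix.zero_mul, add_zero,
    zero_add]

lemma isSkewAdjoint_fromBlocks_iff (hε₁ : ε₁ ≠ 0) (hε₂ : ε₂ ≠ 0)
    {A : Matrix (Fin m) (Fin m) ℝ} {B : Matrix (Fin m) (Fin n) ℝ}
    {C : Matrix (Fin n) (Fin m) ℝ} {D : Matrix (Fin n) (Fin n) ℝ} :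
    (fromBlocks (ε₁ • AntiDiag m) 0 0 (ε₂ • AntiDiag n)).IsSkewAdjoint (fromBlocks A B C D) ↔
      antitranspose A = -A ∧ C = -(ε₁ / ε₂) • antitranspose B ∧ antitranspose D = -D := by
  have cancel_antiDiag {p q : ℕ} (a b : ℝ) (M N : Matrix (Fin p) (Fin q) ℝ) :
      a • (AntiDiag p * M) = b • (AntiDiag p * N) ↔ a • M = b • N := by
    rw [← Matrix.mul_smul, ← Matrix.mul_smul, antiDiag_mul_inj]
  have upper_right_iff : ε₂ • antitranspose C = ε₁ • -B ↔ ε₁ • antitranspose B = ε₂ • -C := by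
    rw [← antitranspose_inj, antitranspose_smul, antitranspose_smul, antitranspose_neg,
      antitranspose_antitranspose, smul_neg, smul_neg, eq_comm, neg_eq_iff_eq_neg]
  have lower_left_iff : ε₁ • antitranspose B = ε₂ • -C ↔ C = -(ε₁ / ε₂) • antitranspose B := by
    rw [← inv_smul_eq_iff₀ hε₂, smul_smul, ← div_eq_inv_mul, neg_smul, eq_comm, neg_eq_iff_eq_neg]
  simp only [Matrix.IsSkewAdjoint, Matrix.IsAdjointPair, fromBlocks_transpose, fromBlocks_neg,
    fromBlocks_multiply, fromBlocks_inj, Matrix.mul_zero, Matrix.zero_mul, add_zero, zero_add,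
    Matrix.mul_smul, Matrix.smul_mul, transpose_mul_antiDiag, cancel_antiDiag, upper_right_iff,
    lower_left_iff, and_self_left, smul_right_inj hε₁, smul_right_inj hε₂]

/-- The Lie algebra `𝔤_L` for `L = diag(J_m, J_n)` and the form with matrix
`diag(ε₁ S_m, ε₂ S_n)`. -/
def jordanSkewCentralizer (m n : ℕ) (ε₁ ε₂ : ℝ) :
    LieSubalgebra ℝ (Matrix (Fin m ⊕ Fin n) (Fin m ⊕ Fin n) ℝ) :=
  skewCentralizer (fromBlocks (ε₁ • AntiDiag m) 0 0 (ε₂ • AntiDiag n))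
    (fromBlocks (JordanBlock m) 0 0 (JordanBlock n))

/-- The block matrix `[[0, M], [c M†, 0]]`, as a linear function of its upper right block. -/
def offDiagonalBlocks {R : Type*} [CommSemiring R] (c : R) :
    Matrix (Fin m) (Fin n) R →ₗ[R] Matrix (Fin m ⊕ Fin n) (Fin m ⊕ Fin n) R where
  toFun M := fromBlocks 0 M (c • antitranspose M) 0
  map_add' M N := by
    rw [fromBlocks_add, ← smul_add, add_zero, add_zero]
    rfl
  map_smul' r M := by
    rw [antitranspose_smul, smul_comm, RingHom.id_apply, fromBlocks_smul, smul_zero, smul_zero]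

lemma offDiagonalBlocks_apply {R : Type*} [CommSemiring R] (c : R)
    (M : Matrix (Fin m) (Fin n) R) :
    offDiagonalBlocks c M = fromBlocks 0 M (c • antitranspose M) 0 :=
  rfl

lemma offDiagonalBlocks_injective {R : Type*} [CommSemiring R] (c : R) :
    Function.Injective (offDiagonalBlocks c : Matrix (Fin m) (Fin n) R →ₗ[R] _) :=
  fun _ _ h => (fromBlocks_inj.mp h).2.1

lemma mem_jordanSkewCentralizer_iff (hε₁ : ε₁ ≠ 0) (hε₂ : ε₂ ≠ 0)
    {X : Matrix (Fin m ⊕ Fin n) (Fin m ⊕ Fin n) ℝ} :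
    X ∈ jordanSkewCentralizer m n ε₁ ε₂ ↔
      ∃ M, IsJordanIntertwiner M ∧ X = offDiagonalBlocks (-(ε₁ / ε₂)) M := by
  rw [jordanSkewCentralizer, mem_skewCentralizer]
  constructor
  · rw [← fromBlocks_toBlocks X, isSkewAdjoint_fromBlocks_iff hε₁ hε₂,
      fromBlocks_mul_diag_comm_iff]
    rintro ⟨⟨skewA, hC, skewD⟩, commA, commB, -, commD⟩
    have hA := IsJordanIntertwiner.eq_zero_of_antitranspose_eq_neg commA skewA
    have hD := IsJordanIntertwiner.eq_zero_of_antitranspose_eq_neg commD skewD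
    exact ⟨X.toBlocks₁₂, commB, by rw [hA, hC, hD, offDiagonalBlocks_apply]⟩
  · rintro ⟨M, hM, rfl⟩
    rw [offDiagonalBlocks_apply, isSkewAdjoint_fromBlocks_iff hε₁ hε₂,
      fromBlocks_mul_diag_comm_iff]
    refine ⟨⟨?_, rfl, ?_⟩, ?_, hM, hM.antitranspose.smul _, ?_⟩
    all_goals simp [antitranspose]

lemma isLieAbelian_jordanSkewCentralizer (hε₁ : ε₁ ≠ 0) (hε₂ : ε₂ ≠ 0) :
    IsLieAbelian (jordanSkewCentralizer m n ε₁ ε₂) := by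
  rw [isLieAbelian_iff_forall_mul_comm]
  intro X hX Y hY
  obtain ⟨M, hM, rfl⟩ := (mem_jordanSkewCentralizer_iff hε₁ hε₂).mp hX
  obtain ⟨N, hN, rfl⟩ := (mem_jordanSkewCentralizer_iff hε₁ hε₂).mp hY
  have upper : M * antitranspose N = N * antitranspose M := hM.mul_antitranspose_comm hN
  have lower : antitranspose M * N = antitranspose N * M := by
    simpa only [antitranspose_antitranspose] using
      hM.antitranspose.mul_antitranspose_comm hN.antitranspose
  simp only [offDiagonalBlocks_apply, fromBlocks_multiply, Matrix.mul_smul, Matrix.smul_mul, upper,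
    lower, Matrix.mul_zero, Matrix.zero_mul, add_zero, zero_add, smul_zero]

lemma toSubmodule_jordanSkewCentralizer (hmn : m ≤ n) (hε₁ : ε₁ ≠ 0) (hε₂ : ε₂ ≠ 0) :
    (jordanSkewCentralizer m n ε₁ ε₂).toSubmodule =
      LinearMap.range (offDiagonalBlocks (m := m) (-(ε₁ / ε₂)) ∘ₗ upperToeplitz n) := by
  ext X
  simp only [LieSubalgebra.mem_toSubmodule, mem_jordanSkewCentralizer_iff hε₁ hε₂,
    isJordanIntertwiner_iff_exists_upperToeplitz_eq hmn, LinearMap.mem_range,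
    LinearMap.comp_apply]
  grind

lemma finrank_jordanSkewCentralizer (hmn : m ≤ n) (hε₁ : ε₁ ≠ 0) (hε₂ : ε₂ ≠ 0) :
    Module.finrank ℝ (jordanSkewCentralizer m n ε₁ ε₂).toSubmodule = m := by
  rw [toSubmodule_jordanSkewCentralizer hmn hε₁ hε₂, LinearMap.finrank_range_of_inj,
    Module.finrank_fin_fun]
  exact (offDiagonalBlocks_injective _).comp (upperToeplitz_injective hmn)

end JordanSkewCentralizer

theorem stmt11_general {m n : ℕ} (hmn : m ≤ n) {ε₁ ε₂ : ℝ} (hε₁ : ε₁ ≠ 0) (hε₂ : ε₂ ≠ 0) :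
    (jordanSkewCentralizer m n ε₁ ε₂ : Set (Matrix (Fin m ⊕ Fin n) (Fin m ⊕ Fin n) ℝ)) =
        {X | ∃ M : Matrix (Fin m) (Fin n) ℝ, IsUpperToeplitz M ∧
          X = fromBlocks 0 M (-(ε₁ / ε₂) • (AntiDiag n * Mᵀ * AntiDiag m)) 0} ∧
      IsLieAbelian (jordanSkewCentralizer m n ε₁ ε₂) ∧
      Module.finrank ℝ (jordanSkewCentralizer m n ε₁ ε₂).toSubmodule = m := by
  refine ⟨?_, isLieAbelian_jordanSkewCentralizer hε₁ hε₂,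
    finrank_jordanSkewCentralizer hmn hε₁ hε₂⟩
  ext X
  simp only [SetLike.mem_coe, mem_jordanSkewCentralizer_iff hε₁ hε₂,
    isJordanIntertwiner_iff_isUpperToeplitz hmn, offDiagonalBlocks_apply,
    antiDiag_mul_transpose_mul_antiDiag, Set.mem_ofPred_eq]

/-- For `1 ≤ m ≤ n`, `L = diag(J_m, J_n)` and `g` with matrix
`G = diag(ε₁ S_m, ε₂ S_n)`, `ε₁, ε₂ ∈ {1, -1}`, the algebra `𝔤_L` consists precisely of
the block matrices `[[0, M], [-ε₁ε₂·S_n Mᵀ S_m, 0]]`, where `M` runs over `m × n`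
matrices vanishing below the `(n-m)`-th diagonal and constant along diagonals.
Moreover, `𝔤_L` is an abelian Lie algebra of dimension `m`. -/
theorem stmt11 (m n : ℕ) (hm : 1 ≤ m) (hmn : m ≤ n) (ε₁ ε₂ : ℝ)
    (hε₁ : ε₁ = 1 ∨ ε₁ = -1) (hε₂ : ε₂ = 1 ∨ ε₂ = -1)
    (L G : Matrix (Fin m ⊕ Fin n) (Fin m ⊕ Fin n) ℝ)
    (hLdef : L = Matrix.fromBlocks (JordanBlock m) 0 0 (JordanBlock n))
    (hGdef : G = Matrix.fromBlocks (ε₁ • AntiDiag m) 0 0 (ε₂ • AntiDiag n)) :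
    ({X : Matrix (Fin m ⊕ Fin n) (Fin m ⊕ Fin n) ℝ |
        (∀ u v, (X *ᵥ u) ⬝ᵥ (G *ᵥ v) = - u ⬝ᵥ (G *ᵥ (X *ᵥ v))) ∧ X * L = L * X} =
      {X : Matrix (Fin m ⊕ Fin n) (Fin m ⊕ Fin n) ℝ |
        ∃ M : Matrix (Fin m) (Fin n) ℝ,
          (∀ (i : Fin m) (l : Fin n),
            (l : ℤ) - (i : ℤ) < (n : ℤ) - (m : ℤ) → M i l = 0) ∧
          (∀ (i : Fin m) (l : Fin n) (hi : (i : ℕ) + 1 < m) (hl : (l : ℕ) + 1 < n),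
            M i l = M ⟨(i : ℕ) + 1, hi⟩ ⟨(l : ℕ) + 1, hl⟩) ∧
          X = Matrix.fromBlocks 0 M
                ((-(ε₁ * ε₂)) • (AntiDiag n * Mᵀ * AntiDiag m)) 0}) ∧
    -- `𝔤_L` is abelian
    (∀ X Y : Matrix (Fin m ⊕ Fin n) (Fin m ⊕ Fin n) ℝ,
      X ∈ {X : Matrix (Fin m ⊕ Fin n) (Fin m ⊕ Fin n) ℝ |
        (∀ u v, (X *ᵥ u) ⬝ᵥ (G *ᵥ v) = - u ⬝ᵥ (G *ᵥ (X *ᵥ v))) ∧ X * L = L * X} →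
      Y ∈ {X : Matrix (Fin m ⊕ Fin n) (Fin m ⊕ Fin n) ℝ |
        (∀ u v, (X *ᵥ u) ⬝ᵥ (G *ᵥ v) = - u ⬝ᵥ (G *ᵥ (X *ᵥ v))) ∧ X * L = L * X} →
      X * Y = Y * X) ∧
    -- of dimension `m`
    Module.finrank ℝ (Submodule.span ℝ
        {X : Matrix (Fin m ⊕ Fin n) (Fin m ⊕ Fin n) ℝ |
          (∀ u v, (X *ᵥ u) ⬝ᵥ (G *ᵥ v) = - u ⬝ᵥ (G *ᵥ (X *ᵥ v))) ∧ X * L = L * X}) = m := by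
  have ε₁_ne_zero : ε₁ ≠ 0 := by rcases hε₁ with rfl | rfl <;> norm_num
  have ε₂_ne_zero : ε₂ ≠ 0 := by rcases hε₂ with rfl | rfl <;> norm_num
  have mul_eq_div : ε₁ * ε₂ = ε₁ / ε₂ := by rcases hε₂ with rfl | rfl <;> simp [div_neg]
  obtain ⟨description, abelian, dimension⟩ := stmt11_general hmn ε₁_ne_zero ε₂_ne_zero
  rw [hLdef, hGdef, ← coe_skewCentralizer, mul_eq_div]
  refine ⟨?_, fun X Y hX hY => (isLieAbelian_iff_forall_mul_comm _).mp abelian X hX Y hY, ?_⟩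
  · simpa only [jordanSkewCentralizer, IsUpperToeplitz, and_assoc] using description
  · rwa [← LieSubalgebra.coe_toSubmodule, Submodule.span_eq]
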